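/- arXiv:2206.00349 — 2 statements merged into one kernel-verified Lean document; each statement's English description precedes it below -/
import Mathlib

section
/- (Proposition 2, part 3) Let D be any disjunctive state, i a nominal, φ a hybrid formula, and j a nominal not occurring in D ⋁ (O, i : ◇φ). Then D ⋁ (O, i : ◇φ) is winning if and only if D ⋁ (O, j : R(i,j) ∧ φ) is winning. -/
/-- Hybrid logic formulas over nominals `ℕ` and propositional variables `ℕ`
(the two sorts are kept disjoint by the constructors). -/
inductive Form : Type where
  | prop : ℕ → Form
  | nom : ℕ → Form
  | rel : ℕ → ℕ → Form
  | and : Form → Form → Form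
  | or : Form → Form → Form
  | imp : Form → Form → Form
  | neg : Form → Form
  | at_ : ℕ → Form → Form
  | box : Form → Form
  | dia : Form → Form

/-- A model for hybrid logic: a nonempty set of worlds, an accessibility
relation, a valuation and an assignment of nominals to worlds. -/
structure Model where
  W : Type
  ne : Nonempty W
  R : W → W → Prop
  V : ℕ → W → Prop
  g : ℕ → W

/-- Satisfaction of a formula at a world of a model. -/
def sat (M : Model) : M.W → Form → Prop
  | w, .prop p => M.V p w
  | w, .nom i => M.g i = w
  | _, .rel i j => M.R (M.g i) (M.g j)
  | w, .and φ ψ => sat M w φ ∧ sat M w ψ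
  | w, .or φ ψ => sat M w φ ∨ sat M w ψ
  | w, .imp φ ψ => ¬ sat M w φ ∨ sat M w ψ
  | w, .neg φ => ¬ sat M w φ
  | _, .at_ i φ => sat M (M.g i) φ
  | w, .box φ => ∀ v, M.R w v → sat M v φ
  | w, .dia φ => ∃ v, M.R w v ∧ sat M v φ

/-- A model is named iff every world has a name, i.e. the assignment is surjective. -/
def Model.Named (M : Model) : Prop := Function.Surjective M.g

/-- A formula is valid iff it is true at every world of every model. -/
def Valid (φ : Form) : Prop := ∀ (M : Model) (w : M.W), sat M w φ

/-- Roles: `pro` means I am the proponent (`P`), `opp` that I am the opponent (`O`). -/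
inductive Role : Type where
  | pro : Role
  | opp : Role

/-- Role switch. -/
def Role.swap : Role → Role
  | .pro => .opp
  | .opp => .pro

/-- Game states of the semantic game over a named model, with worlds referred to
by their names: `loc r i φ` is `Q, i : φ` and `glob r φ` is `Q : φ`. -/
inductive NState : Type where
  | loc : Role → ℕ → Form → NState
  | glob : Role → Form → NState

/-- Elementary formulas: `p`, `i`, `R(i,j)`. -/
def Form.elem : Form → Prop
  | .prop _ => True
  | .nom _ => True
  | .rel _ _ => True
  | _ => False

/-- Elementary game states: states `Q, i : φ` with `φ` elementary (these are the
leaves of the semantic game over named models). -/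
def NState.elem : NState → Prop
  | .loc _ _ φ => φ.elem
  | .glob _ _ => False

/-- States labelled "I" (where it is My choice); all other non-leaf states are labelled "Y". -/
def NState.myTurn : NState → Prop
  | .loc .pro _ (.or _ _) => True
  | .loc .pro _ (.imp _ _) => True
  | .loc .pro _ (.neg _) => True
  | .loc .pro _ (.at_ _ _) => True
  | .loc .pro _ (.dia _) => True
  | .loc .opp _ (.and _ _) => True
  | .loc .opp _ (.box _) => True
  | .glob .opp _ => True
  | _ => False

/-- The (model-independent) child relation of the semantic game over named models,
using the reformulated rules `(R_□)`, `(R_◇)` and `(R_U)`: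
`NChild s t` says that `t` is a child of `s` in the game tree. -/
inductive NChild : NState → NState → Prop where
  | orL (r i φ ψ) : NChild (.loc r i (.or φ ψ)) (.loc r i φ)
  | orR (r i φ ψ) : NChild (.loc r i (.or φ ψ)) (.loc r i ψ)
  | andL (r i φ ψ) : NChild (.loc r i (.and φ ψ)) (.loc r i φ)
  | andR (r i φ ψ) : NChild (.loc r i (.and φ ψ)) (.loc r i ψ)
  | impL (r i φ ψ) : NChild (.loc r i (.imp φ ψ)) (.loc r.swap i φ)
  | impR (r i φ ψ) : NChild (.loc r i (.imp φ ψ)) (.loc r i ψ)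
  | neg (r i φ) : NChild (.loc r i (.neg φ)) (.loc r.swap i φ)
  | at_ (r i j φ) : NChild (.loc r i (.at_ j φ)) (.loc r j φ)
  | box (r i φ) (j : ℕ) : NChild (.loc r i (.box φ)) (.loc r j (.or (.neg (.rel i j)) φ))
  | dia (r i φ) (j : ℕ) : NChild (.loc r i (.dia φ)) (.loc r j (.and (.rel i j) φ))
  | glob (r φ) (i : ℕ) : NChild (.glob r φ) (.loc r i φ)

/-- The label of an elementary leaf state in the game over the model `M`:
"I" iff the corresponding elementary claim is correct. -/
def elemIWin (M : Model) : NState → Prop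
  | .loc .pro i φ => sat M (M.g i) φ
  | .loc .opp i φ => ¬ sat M (M.g i) φ
  | .glob _ _ => False

/-- I have a winning strategy for the semantic game `G(M, s)` over a named model:
at "I"-nodes I keep one child, at "Y"-nodes all children, and all leaves are labelled "I". -/
inductive IWinsN (M : Model) : NState → Prop where
  | leaf {s} : s.elem → elemIWin M s → IWinsN M s
  | move {s t} : s.myTurn → NChild s t → IWinsN M t → IWinsN M s
  | resp {s} : ¬ s.myTurn → ¬ s.elem → (∀ t, NChild s t → IWinsN M t) → IWinsN M s

/-- You have a winning strategy for the semantic game `G(M, s)` over a named model: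
at "Y"-nodes You keep one child, at "I"-nodes all children, and all leaves are labelled "Y". -/
inductive YWinsN (M : Model) : NState → Prop where
  | leaf {s} : s.elem → ¬ elemIWin M s → YWinsN M s
  | move {s t} : ¬ s.myTurn → NChild s t → YWinsN M t → YWinsN M s
  | resp {s} : s.myTurn → (∀ t, NChild s t → YWinsN M t) → YWinsN M s

/-- A disjunctive state: a finite multiset of game states. -/
abbrev DState : Type := Multiset NState

/-- A disjunctive state is elementary iff all its game states are. -/
def DElem (D : DState) : Prop := ∀ s ∈ D, s.elem

/-- A regulation function maps every non-elementary disjunctive state to one of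
its non-elementary game states. -/
def IsRegulation (ρ : DState → NState) : Prop :=
  ∀ D : DState, ¬ DElem D → ρ D ∈ D ∧ ¬ (ρ D).elem

/-- `D` is game valid: for every named model `M` there is a member of `D` for
which I have a winning strategy in the semantic game over `M`. -/
def GameValid (D : DState) : Prop :=
  ∀ M : Model, M.Named → ∃ s ∈ D, IWinsN M s

/-- I have a winning strategy for the disjunctive game `DG(D, ρ)`.
At the state `g ⋁ D` with `ρ (g ⋁ D) = g`: if `g` is labelled "I", I either move in `g`
or duplicate `g`; if `g` is labelled "Y", You move in `g` and I must win after every move.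
An elementary disjunctive state is a leaf labelled "I" (winning for Me) iff for every named
model some member of it is a leaf labelled "I" of the semantic game over that model.
Since winning strategies are wellfounded trees, infinite plays are not winning for Me. -/
inductive DWins (ρ : DState → NState) : DState → Prop where
  | leaf {D : DState} : DElem D → (∀ M : Model, M.Named → ∃ s ∈ D, IWinsN M s) →
      DWins ρ D
  | movI {D : DState} {g g' : NState} : ρ (g ::ₘ D) = g → g.myTurn → NChild g g' →
      DWins ρ (g' ::ₘ D) → DWins ρ (g ::ₘ D)
  | dup {D : DState} {g : NState} : ρ (g ::ₘ D) = g → g.myTurn →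
      DWins ρ (g ::ₘ g ::ₘ D) → DWins ρ (g ::ₘ D)
  | movY {D : DState} {g : NState} : ρ (g ::ₘ D) = g → ¬ g.myTurn → ¬ g.elem →
      (∀ g', NChild g g' → DWins ρ (g' ::ₘ D)) → DWins ρ (g ::ₘ D)

/-- `D` is winning: there is a regulation `ρ` such that I have a winning strategy
for `DG(D, ρ)`. -/
def Winning (D : DState) : Prop :=
  ∃ ρ : DState → NState, IsRegulation ρ ∧ DWins ρ D

/-- `Form.occurs k φ`: the nominal `k` occurs in the formula `φ`. -/
def Form.occurs (k : ℕ) : Form → Prop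
  | .prop _ => False
  | .nom i => i = k
  | .rel i j => i = k ∨ j = k
  | .and φ ψ => φ.occurs k ∨ ψ.occurs k
  | .or φ ψ => φ.occurs k ∨ ψ.occurs k
  | .imp φ ψ => φ.occurs k ∨ ψ.occurs k
  | .neg φ => φ.occurs k
  | .at_ i φ => i = k ∨ φ.occurs k
  | .box φ => φ.occurs k
  | .dia φ => φ.occurs k

/-- A nominal occurs in a game state iff it occurs as its label or in its formula. -/
def NState.occurs (k : ℕ) : NState → Prop
  | .loc _ i φ => i = k ∨ φ.occurs k
  | .glob _ φ => φ.occurs k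

/-- A nominal occurs in a disjunctive state iff it occurs in one of its game states. -/
def DOccurs (k : ℕ) (D : DState) : Prop := ∃ s ∈ D, s.occurs k

/-- Regulation-free derivations. -/
inductive Der : DState → Prop where
  | leaf {D : DState} : DElem D → (∀ M : Model, M.Named → ∃ s ∈ D, IWinsN M s) → Der D
  | movI {D : DState} {g g' : NState} : g.myTurn → NChild g g' → Der (g' ::ₘ D) → Der (g ::ₘ D)
  | dup {D : DState} {g : NState} : g.myTurn → Der (g ::ₘ g ::ₘ D) → Der (g ::ₘ D)
  | movY {D : DState} {g : NState} : ¬ g.myTurn → ¬ g.elem →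
      (∀ g', NChild g g' → Der (g' ::ₘ D)) → Der (g ::ₘ D)

/-- Ranked regulation-free derivations. -/
inductive DerR : Ordinal.{0} → DState → Prop where
  | leaf {a : Ordinal.{0}} {D : DState} : DElem D →
      (∀ M : Model, M.Named → ∃ s ∈ D, IWinsN M s) → DerR a D
  | movI {a b : Ordinal.{0}} {D : DState} {g g' : NState} : b < a → g.myTurn → NChild g g' →
      DerR b (g' ::ₘ D) → DerR a (g ::ₘ D)
  | dup {a b : Ordinal.{0}} {D : DState} {g : NState} : b < a → g.myTurn →
      DerR b (g ::ₘ g ::ₘ D) → DerR a (g ::ₘ D)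
  | movY {a : Ordinal.{0}} {D : DState} {g : NState} (f : NState → Ordinal.{0}) :
      (∀ g', f g' < a) → ¬ g.myTurn → ¬ g.elem →
      (∀ g', NChild g g' → DerR (f g') (g' ::ₘ D)) → DerR a (g ::ₘ D)

theorem NState.not_elem_of_myTurn {g : NState} (h : g.myTurn) : ¬ g.elem := by
  rcases g with ⟨r, i, φ⟩ | ⟨r, φ⟩
  · cases r <;> cases φ <;> simp_all [NState.myTurn, NState.elem, Form.elem]
  · simp [NState.elem]

theorem Der.exists_rank {D : DState} (h : Der D) : ∃ a, DerR a D := by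
  induction h with
  | leaf h1 h2 => exact ⟨0, .leaf h1 h2⟩
  | movI h1 h2 _ ih =>
    obtain ⟨a, ha⟩ := ih
    exact ⟨Order.succ a, .movI (Order.lt_succ a) h1 h2 ha⟩
  | dup h1 _ ih =>
    obtain ⟨a, ha⟩ := ih
    exact ⟨Order.succ a, .dup (Order.lt_succ a) h1 ha⟩
  | @movY D g h1 h2 _ ih =>
    have ih' : ∀ g', ∃ a, NChild g g' → DerR a (g' ::ₘ D) := by
      intro g'
      by_cases hc : NChild g g'
      · obtain ⟨a, ha⟩ := ih g' hc
        exact ⟨a, fun _ => ha⟩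
      · exact ⟨0, fun h => absurd h hc⟩
    choose f hf using ih'
    refine ⟨Order.succ (⨆ x, f x), .movY f (fun g' => ?_) h1 h2 hf⟩
    exact Order.lt_succ_of_le (Ordinal.le_iSup f g')

/-- One step of a ranked derivation with principal state `g`. -/
def StepR (a : Ordinal.{0}) (g : NState) (E : DState) : Prop :=
  ¬ g.elem ∧
  ((g.myTurn ∧ ∃ b < a, ∃ g', NChild g g' ∧ DerR b (g' ::ₘ E)) ∨
   (g.myTurn ∧ ∃ b < a, DerR b (g ::ₘ g ::ₘ E)) ∨
   (¬ g.myTurn ∧ ∀ g', NChild g g' → ∃ b < a, DerR b (g' ::ₘ E)))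

theorem DerR.step {a : Ordinal.{0}} {D : DState} (h : DerR a D) :
    (DElem D ∧ ∀ M : Model, M.Named → ∃ s ∈ D, IWinsN M s) ∨
    ∃ g E, D = g ::ₘ E ∧ StepR a g E := by
  cases h with
  | leaf h1 h2 => exact Or.inl ⟨h1, h2⟩
  | movI hb h1 h2 h3 =>
    exact Or.inr ⟨_, _, rfl, NState.not_elem_of_myTurn h1, Or.inl ⟨h1, _, hb, _, h2, h3⟩⟩
  | dup hb h1 h3 =>
    exact Or.inr ⟨_, _, rfl, NState.not_elem_of_myTurn h1, Or.inr (Or.inl ⟨h1, _, hb, h3⟩)⟩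
  | movY f hf h1 h2 h3 =>
    exact Or.inr ⟨_, _, rfl, h2, Or.inr (Or.inr ⟨h1, fun g' hg => ⟨f g', hf g', h3 g' hg⟩⟩)⟩

theorem exists_choice (D : DState) : ∃ g : NState, (¬ DElem D → g ∈ D ∧ ¬ g.elem) ∧
    (¬ DElem D → (∃ a, DerR a D) → ∃ E, D = g ::ₘ E ∧ StepR (sInf {a | DerR a D}) g E) := by
  by_cases he : DElem D
  · exact ⟨.glob .pro (.prop 0), fun h => absurd he h, fun h => absurd he h⟩
  by_cases hd : ∃ a, DerR a D
  · have hm : DerR (sInf {a | DerR a D}) D := csInf_mem (s := {a | DerR a D}) hd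
    rcases hm.step with h | ⟨g, E, h1, h2⟩
    · exact absurd h.1 he
    · refine ⟨g, fun _ => ⟨?_, h2.1⟩, fun _ _ => ⟨E, h1, h2⟩⟩
      rw [h1]; exact Multiset.mem_cons_self _ _
  · have he' := he
    unfold DElem at he'
    push Not at he'
    obtain ⟨g, h1, h2⟩ := he'
    exact ⟨g, fun _ => ⟨h1, h2⟩, fun _ h => absurd h hd⟩

theorem Der.winning {D : DState} (h : Der D) : Winning D := by
  choose ρ h1 h2 using exists_choice
  refine ⟨ρ, h1, ?_⟩
  obtain ⟨a, ha⟩ := h.exists_rank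
  induction a using WellFoundedLT.induction generalizing D with
  | ind a ih =>
  by_cases he : DElem D
  · rcases ha.step with h | ⟨g, E, h3, h4⟩
    · exact .leaf h.1 h.2
    · exact absurd (he g (by rw [h3]; exact Multiset.mem_cons_self _ _)) h4.1
  · obtain ⟨E, hE, hs⟩ := h2 D he ⟨a, ha⟩
    have hle : sInf {a | DerR a D} ≤ a := csInf_le' ha
    have toDer : ∀ {b D}, DerR b D → Der D := by
      intro b D hb
      induction hb with
      | leaf h1 h2 => exact .leaf h1 h2
      | movI _ h1 h2 _ ih => exact .movI h1 h2 ih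
      | dup _ h1 _ ih => exact .dup h1 ih
      | movY f _ h1 h2 _ ih => exact .movY h1 h2 ih
    have hρ : ρ (ρ D ::ₘ E) = ρ D := by rw [← hE]
    rw [hE]
    rcases hs with ⟨hne, ⟨ht, b, hb, g', hc, hd⟩ | ⟨ht, b, hb, hd⟩ | ⟨ht, hd⟩⟩
    · exact .movI hρ ht hc (ih b (hb.trans_le hle) (toDer hd) hd)
    · exact .dup hρ ht (ih b (hb.trans_le hle) (toDer hd) hd)
    · refine .movY hρ ht hne fun g' hc => ?_
      obtain ⟨b, hb, hd⟩ := hd g' hc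
      exact ih b (hb.trans_le hle) (toDer hd) hd

theorem Winning.der {D : DState} (h : Winning D) : Der D := by
  obtain ⟨ρ, _, h⟩ := h
  induction h with
  | leaf h1 h2 => exact .leaf h1 h2
  | movI _ h1 h2 _ ih => exact .movI h1 h2 ih
  | dup _ h1 _ ih => exact .dup h1 ih
  | movY _ h1 h2 _ ih => exact .movY h1 h2 ih

/-- Inversion of the rules for Your moves. -/
theorem Der.inv {D : DState} (h : Der D) : ∀ {g g' : NState} {E : DState}, D = g ::ₘ E →
    ¬ g.myTurn → ¬ g.elem → NChild g g' → Der (g' ::ₘ E) := by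
  induction h with
  | leaf h1 h2 =>
    intro g g' E hD ht he hc
    exact absurd (h1 g (by rw [hD]; exact Multiset.mem_cons_self _ _)) he
  | @movI D g₁ g₁' h1 h2 _ ih =>
    intro g g' E hD ht he hc
    rcases Multiset.cons_eq_cons.1 hD with ⟨rfl, rfl⟩ | ⟨_, F, rfl, rfl⟩
    · exact absurd h1 ht
    · rw [Multiset.cons_swap]
      refine .movI h1 h2 ?_
      rw [Multiset.cons_swap]
      exact ih (Multiset.cons_swap _ _ _) ht he hc
  | @dup D g₁ h1 _ ih =>
    intro g g' E hD ht he hc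
    rcases Multiset.cons_eq_cons.1 hD with ⟨rfl, rfl⟩ | ⟨_, F, rfl, rfl⟩
    · exact absurd h1 ht
    · rw [Multiset.cons_swap]
      refine .dup h1 ?_
      rw [Multiset.cons_swap g₁ g', Multiset.cons_swap g₁ g']
      refine ih ?_ ht he hc
      rw [Multiset.cons_swap g₁ g, Multiset.cons_swap g₁ g]
  | @movY D g₁ h1 h2 h3 ih =>
    intro g g' E hD ht he hc
    rcases Multiset.cons_eq_cons.1 hD with ⟨rfl, rfl⟩ | ⟨_, F, rfl, rfl⟩
    · exact h3 g' hc
    · rw [Multiset.cons_swap]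
      refine .movY h1 h2 fun g₁' hc' => ?_
      rw [Multiset.cons_swap]
      exact ih g₁' hc' (Multiset.cons_swap _ _ _) ht he hc

/-- Renaming of nominals. -/
def Form.ren (σ : ℕ → ℕ) : Form → Form
  | .prop p => .prop p
  | .nom i => .nom (σ i)
  | .rel i j => .rel (σ i) (σ j)
  | .and φ ψ => .and (φ.ren σ) (ψ.ren σ)
  | .or φ ψ => .or (φ.ren σ) (ψ.ren σ)
  | .imp φ ψ => .imp (φ.ren σ) (ψ.ren σ)
  | .neg φ => .neg (φ.ren σ)
  | .at_ i φ => .at_ (σ i) (φ.ren σ)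
  | .box φ => .box (φ.ren σ)
  | .dia φ => .dia (φ.ren σ)

/-- Renaming of nominals in a game state. -/
def NState.ren (σ : ℕ → ℕ) : NState → NState
  | .loc r i φ => .loc r (σ i) (φ.ren σ)
  | .glob r φ => .glob r (φ.ren σ)

theorem Form.ren_id {σ : ℕ → ℕ} {φ : Form} (h : ∀ n, φ.occurs n → σ n = n) : φ.ren σ = φ := by
  induction φ <;> simp_all [Form.ren, Form.occurs]

theorem NState.ren_id {σ : ℕ → ℕ} {s : NState} (h : ∀ n, s.occurs n → σ n = n) :
    s.ren σ = s := by
  cases s with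
  | loc r i φ =>
    simp only [NState.ren, h i (Or.inl rfl), Form.ren_id fun n hn => h n (Or.inr hn)]
  | glob r φ => simp only [NState.ren, Form.ren_id fun n hn => h n hn]

theorem Form.bound (φ : Form) : ∃ B, ∀ n, φ.occurs n → n < B := by
  induction φ with
  | prop p => exact ⟨0, fun n h => h.elim⟩
  | nom i => exact ⟨i + 1, fun n h => by simp only [Form.occurs] at h; omega⟩
  | rel i j => exact ⟨i + j + 1, fun n h => by simp only [Form.occurs] at h; omega⟩
  | and φ ψ h1 h2 | or φ ψ h1 h2 | imp φ ψ h1 h2 =>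
    obtain ⟨B, hB⟩ := h1
    obtain ⟨C, hC⟩ := h2
    exact ⟨B + C, fun n h => h.elim (fun h => by have := hB n h; omega)
      (fun h => by have := hC n h; omega)⟩
  | neg φ h | box φ h | dia φ h => exact h
  | at_ i φ h =>
    obtain ⟨B, hB⟩ := h
    exact ⟨B + i + 1, fun n h => h.elim (fun h => by omega) (fun h => by have := hB n h; omega)⟩

theorem NState.bound (s : NState) : ∃ B, ∀ n, s.occurs n → n < B := by
  cases s with
  | loc r i φ =>
    obtain ⟨B, hB⟩ := φ.bound
    exact ⟨B + i + 1, fun n h => h.elim (fun h => by omega) (fun h => by have := hB n h; omega)⟩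
  | glob r φ => exact φ.bound

theorem dbound (D : DState) : ∃ B, ∀ n, DOccurs n D → n < B := by
  induction D using Multiset.induction with
  | empty => exact ⟨0, fun n ⟨s, h, _⟩ => absurd h (Multiset.notMem_zero s)⟩
  | cons g D ih =>
    obtain ⟨B, hB⟩ := ih
    obtain ⟨C, hC⟩ := g.bound
    refine ⟨B + C, fun n ⟨s, hs, ho⟩ => ?_⟩
    rcases Multiset.mem_cons.1 hs with rfl | hs
    · have := hC n ho
      omega
    · have := hB n ⟨s, hs, ho⟩
      omega

theorem NState.ren_elem (σ : ℕ → ℕ) (s : NState) : (s.ren σ).elem ↔ s.elem := by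
  rcases s with ⟨r, i, φ⟩ | ⟨r, φ⟩
  · cases φ <;> simp [NState.ren, Form.ren, NState.elem, Form.elem]
  · simp [NState.ren, NState.elem]

theorem NState.ren_myTurn (σ : ℕ → ℕ) (s : NState) : (s.ren σ).myTurn ↔ s.myTurn := by
  rcases s with ⟨r, i, φ⟩ | ⟨r, φ⟩
  · cases r <;> cases φ <;> simp [NState.ren, Form.ren, NState.myTurn]
  · cases r <;> simp [NState.ren, NState.myTurn]

theorem NChild.ren (σ : ℕ → ℕ) {s t : NState} (h : NChild s t) : NChild (s.ren σ) (t.ren σ) := by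
  cases h <;> simp only [NState.ren, Form.ren] <;> constructor

theorem NChild.of_ren {σ : ℕ → ℕ} (hσ : Function.Surjective σ) {s t : NState}
    (h : NChild (s.ren σ) t) : ∃ t', NChild s t' ∧ t'.ren σ = t := by
  rcases s with ⟨r, i, φ⟩ | ⟨r, φ⟩
  · cases φ <;> simp only [NState.ren, Form.ren] at h
    case prop | nom | rel => cases h
    case and =>
      cases h
      · exact ⟨_, .andL .., rfl⟩
      · exact ⟨_, .andR .., rfl⟩
    case or =>
      cases h
      · exact ⟨_, .orL .., rfl⟩
      · exact ⟨_, .orR .., rfl⟩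
    case imp =>
      cases h
      · exact ⟨_, .impL .., rfl⟩
      · exact ⟨_, .impR .., rfl⟩
    case neg => cases h; exact ⟨_, .neg .., rfl⟩
    case at_ => cases h; exact ⟨_, .at_ .., rfl⟩
    case box =>
      cases h with
      | box _ _ _ j =>
      obtain ⟨m, rfl⟩ := hσ j
      exact ⟨_, .box _ _ _ m, rfl⟩
    case dia =>
      cases h with
      | dia _ _ _ j =>
      obtain ⟨m, rfl⟩ := hσ j
      exact ⟨_, .dia _ _ _ m, rfl⟩
  · simp only [NState.ren] at h
    cases h with
    | glob _ _ j =>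
    obtain ⟨m, rfl⟩ := hσ j
    exact ⟨_, .glob _ _ m, rfl⟩

/-- The model with renamed assignment. -/
def Model.ren (M : Model) (σ : ℕ → ℕ) : Model := ⟨M.W, M.ne, M.R, M.V, fun n => M.g (σ n)⟩

theorem elemIWin_ren (M : Model) (σ : ℕ → ℕ) {s : NState} (hs : s.elem)
    (h : elemIWin (M.ren σ) s) : elemIWin M (s.ren σ) := by
  rcases s with ⟨r, i, φ⟩ | ⟨r, φ⟩
  · cases r <;> cases φ <;> first | exact hs.elim | exact h
  · exact hs.elim

theorem IWinsN.elemIWin {M : Model} {s : NState} (hs : s.elem) (h : IWinsN M s) :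
    elemIWin M s := by
  cases h with
  | leaf _ h => exact h
  | move h => exact absurd hs (NState.not_elem_of_myTurn h)
  | resp _ h => exact absurd hs h

theorem Der.ren {σ : ℕ → ℕ} (hσ : Function.Surjective σ) {D : DState} (h : Der D) :
    Der (D.map (NState.ren σ)) := by
  induction h with
  | @leaf D h1 h2 =>
    refine .leaf ?_ fun M hM => ?_
    · intro s hs
      obtain ⟨t, ht, rfl⟩ := Multiset.mem_map.1 hs
      exact (t.ren_elem σ).2 (h1 t ht)
    · obtain ⟨s, hs, hw⟩ := h2 (M.ren σ) (hM.comp hσ)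
      exact ⟨_, Multiset.mem_map_of_mem _ hs, .leaf ((s.ren_elem σ).2 (h1 s hs))
        (elemIWin_ren M σ (h1 s hs) (hw.elemIWin (h1 s hs)))⟩
  | movI h1 h2 _ ih =>
    rw [Multiset.map_cons] at ih ⊢
    exact .movI ((NState.ren_myTurn σ _).2 h1) (h2.ren σ) ih
  | dup h1 _ ih =>
    rw [Multiset.map_cons, Multiset.map_cons] at ih
    rw [Multiset.map_cons]
    exact .dup ((NState.ren_myTurn σ _).2 h1) ih
  | movY h1 h2 _ ih =>
    rw [Multiset.map_cons]
    refine .movY (fun h => h1 ((NState.ren_myTurn σ _).1 h))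
      (fun h => h2 ((NState.ren_elem σ _).1 h)) fun t ht => ?_
    obtain ⟨t', hc, rfl⟩ := NChild.of_ren hσ ht
    have := ih t' hc
    rwa [Multiset.map_cons] at this

/-- (Proposition 2, part 3) For a nominal `j` not occurring in `D ⋁ (O, i : ◇φ)`:
`D ⋁ (O, i : ◇φ)` is winning iff `D ⋁ (O, j : R(i,j) ∧ φ)` is winning. -/
theorem winning_dia_iff_winning_fresh (D : DState) (i j : ℕ) (φ : Form)
    (hj : ¬ DOccurs j (NState.loc .opp i (.dia φ) ::ₘ D)) :
    Winning (NState.loc .opp i (.dia φ) ::ₘ D) ↔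
      Winning (NState.loc .opp j (.and (.rel i j) φ) ::ₘ D) := by
  constructor
  · intro h
    exact (h.der.inv rfl (fun h => h) (fun h => h) (.dia _ _ _ j)).winning
  · intro h
    refine Der.winning (.movY (fun h => h) (fun h => h) fun g' hc => ?_)
    cases hc with
    | dia _ _ _ k =>
    obtain ⟨B, hB⟩ := dbound (NState.loc .opp i (.dia φ) ::ₘ D)
    let σ : ℕ → ℕ := fun n => if n = j then k else if n < B then n else n - (B + j + 1)
    have hσ : Function.Surjective σ := by
      intro m
      refine ⟨m + (B + j + 1), ?_⟩
      have h1 : ¬ (m + (B + j + 1) = j) := by omega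
      have h2 : ¬ (m + (B + j + 1) < B) := by omega
      simp only [σ, if_neg h1, if_neg h2]
      omega
    have hj' : σ j = k := by simp [σ]
    have hid : ∀ n, DOccurs n (NState.loc .opp i (.dia φ) ::ₘ D) → σ n = n := by
      intro n hn
      have h1 : n ≠ j := by
        rintro rfl
        exact hj hn
      simp only [σ, if_neg h1, if_pos (hB n hn)]
    have hi : σ i = i := hid i ⟨_, Multiset.mem_cons_self _ _, Or.inl rfl⟩
    have hφ : φ.ren σ = φ :=
      Form.ren_id fun n hn => hid n ⟨_, Multiset.mem_cons_self _ _, Or.inr hn⟩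
    have hD : D.map (NState.ren σ) = D := by
      conv_rhs => rw [← Multiset.map_id D]
      exact Multiset.map_congr rfl fun s hs =>
        NState.ren_id fun n hn => hid n ⟨s, Multiset.mem_cons_of_mem hs, hn⟩
    have := h.der.ren hσ
    rw [Multiset.map_cons, hD] at this
    simpa only [NState.ren, Form.ren, hj', hi, hφ] using this
end

section
/- (Theorem 3: soundness and completeness of DS) For every hybrid formula φ: the sequent ⊢ φ is provable in the calculus DS if and only if φ is valid (⊨ φ), i.e., M, w ⊨ φ for every model M and world w. -/
/-- Labelled formulas `i : φ` and plain (unlabelled) formulas. -/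
inductive LForm : Type where
  | lab : ℕ → Form → LForm
  | plain : Form → LForm

/-- Elementary formulas: `p`, `i`, `R(i,j)`. -/
def Form.elemF : Form → Prop
  | .prop _ => True
  | .nom _ => True
  | .rel _ _ => True
  | _ => False

/-- Elementary members of a sequent: labelled elementary formulas. -/
def LForm.elemL : LForm → Prop
  | .lab _ φ => φ.elemF
  | .plain _ => False

/-- `Form.occursF k φ`: the nominal `k` occurs in the formula `φ`. -/
def Form.occursF (k : ℕ) : Form → Prop
  | .prop _ => False
  | .nom i => i = k
  | .rel i j => i = k ∨ j = k
  | .and φ ψ => φ.occursF k ∨ ψ.occursF k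
  | .or φ ψ => φ.occursF k ∨ ψ.occursF k
  | .imp φ ψ => φ.occursF k ∨ ψ.occursF k
  | .neg φ => φ.occursF k
  | .at_ i φ => i = k ∨ φ.occursF k
  | .box φ => φ.occursF k
  | .dia φ => φ.occursF k

/-- A nominal occurs in a (labelled) formula. -/
def LForm.occursL (k : ℕ) : LForm → Prop
  | .lab i φ => i = k ∨ φ.occursF k
  | .plain φ => φ.occursF k

/-- The sequent `Γ ⊢ Δ` is (game) valid: for every named model, some labelled formula
of `Δ` is true at (the world named by) its label, or some labelled formula of `Γ` is
false at its label. -/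
def SeqValid (Γ Δ : Multiset LForm) : Prop :=
  ∀ M : Model, M.Named →
    (∃ i φ, LForm.lab i φ ∈ Δ ∧ sat M (M.g i) φ) ∨
    (∃ i φ, LForm.lab i φ ∈ Γ ∧ ¬ sat M (M.g i) φ)

/-- The sequent calculus `DS`. `DS Γ Δ` means that `Γ ⊢ Δ` is provable. -/
inductive DS : Multiset LForm → Multiset LForm → Prop where
  | V {Γ Δ} : (∀ f ∈ Γ, LForm.elemL f) → (∀ f ∈ Δ, LForm.elemL f) → SeqValid Γ Δ →
      DS Γ Δ
  | CL {Γ Δ i φ} : DS (.lab i φ ::ₘ .lab i φ ::ₘ Γ) Δ → DS (.lab i φ ::ₘ Γ) Δ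
  | CR {Γ Δ i φ} : DS Γ (.lab i φ ::ₘ .lab i φ ::ₘ Δ) → DS Γ (.lab i φ ::ₘ Δ)
  | U {i φ} : ¬ Form.occursF i φ → DS 0 {LForm.lab i φ} → DS 0 {LForm.plain φ}
  | Lor {Γ Δ i φ ψ} : DS (.lab i φ ::ₘ Γ) Δ → DS (.lab i ψ ::ₘ Γ) Δ →
      DS (.lab i (.or φ ψ) ::ₘ Γ) Δ
  | Ror1 {Γ Δ i φ ψ} : DS Γ (.lab i φ ::ₘ Δ) → DS Γ (.lab i (.or φ ψ) ::ₘ Δ)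
  | Ror2 {Γ Δ i φ ψ} : DS Γ (.lab i ψ ::ₘ Δ) → DS Γ (.lab i (.or φ ψ) ::ₘ Δ)
  | Land1 {Γ Δ i φ ψ} : DS (.lab i φ ::ₘ Γ) Δ → DS (.lab i (.and φ ψ) ::ₘ Γ) Δ
  | Land2 {Γ Δ i φ ψ} : DS (.lab i ψ ::ₘ Γ) Δ → DS (.lab i (.and φ ψ) ::ₘ Γ) Δ
  | Rand {Γ Δ i φ ψ} : DS Γ (.lab i φ ::ₘ Δ) → DS Γ (.lab i ψ ::ₘ Δ) →
      DS Γ (.lab i (.and φ ψ) ::ₘ Δ)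
  | Limp {Γ Δ i φ ψ} : DS Γ (.lab i φ ::ₘ Δ) → DS (.lab i ψ ::ₘ Γ) Δ →
      DS (.lab i (.imp φ ψ) ::ₘ Γ) Δ
  | Rimp1 {Γ Δ i φ ψ} : DS (.lab i φ ::ₘ Γ) Δ → DS Γ (.lab i (.imp φ ψ) ::ₘ Δ)
  | Rimp2 {Γ Δ i φ ψ} : DS Γ (.lab i ψ ::ₘ Δ) → DS Γ (.lab i (.imp φ ψ) ::ₘ Δ)
  | Lneg {Γ Δ i φ} : DS Γ (.lab i φ ::ₘ Δ) → DS (.lab i (.neg φ) ::ₘ Γ) Δ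
  | Rneg {Γ Δ i φ} : DS (.lab i φ ::ₘ Γ) Δ → DS Γ (.lab i (.neg φ) ::ₘ Δ)
  | Lat {Γ Δ i j φ} : DS (.lab j φ ::ₘ Γ) Δ → DS (.lab i (.at_ j φ) ::ₘ Γ) Δ
  | Rat {Γ Δ i j φ} : DS Γ (.lab j φ ::ₘ Δ) → DS Γ (.lab i (.at_ j φ) ::ₘ Δ)
  | Lbox {Γ Δ i j φ} : DS (.lab j (.or (.neg (.rel i j)) φ) ::ₘ Γ) Δ →
      DS (.lab i (.box φ) ::ₘ Γ) Δ
  | Rbox {Γ Δ i j φ} : (∀ f ∈ Γ, ¬ LForm.occursL j f) → (∀ f ∈ Δ, ¬ LForm.occursL j f) →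
      j ≠ i → ¬ Form.occursF j φ →
      DS Γ (.lab j (.or (.neg (.rel i j)) φ) ::ₘ Δ) → DS Γ (.lab i (.box φ) ::ₘ Δ)
  | Ldia {Γ Δ i j φ} : (∀ f ∈ Γ, ¬ LForm.occursL j f) → (∀ f ∈ Δ, ¬ LForm.occursL j f) →
      j ≠ i → ¬ Form.occursF j φ →
      DS (.lab j (.and (.rel i j) φ) ::ₘ Γ) Δ → DS (.lab i (.dia φ) ::ₘ Γ) Δ
  | Rdia {Γ Δ i j φ} : DS Γ (.lab j (.and (.rel i j) φ) ::ₘ Δ) →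
      DS Γ (.lab i (.dia φ) ::ₘ Δ)

def satL (M : Model) : LForm → Prop
  | .lab i φ => sat M (M.g i) φ
  | .plain φ => ∀ w, sat M w φ

def upd (M : Model) (j : ℕ) (v : M.W) : Model :=
  { M with g := Function.update M.g j v }

theorem sat_upd (M : Model) (j : ℕ) (v : M.W) (φ : Form) (h : ¬ φ.occursF j) :
    ∀ w : M.W, sat (upd M j v) w φ ↔ sat M w φ := by
  induction φ with
  | prop p => intro w; simp [sat, upd]
  | nom i => intro w; simp only [Form.occursF] at h; simp [sat, upd, Function.update_of_ne h]
  | rel a b =>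
    intro w; simp only [Form.occursF, not_or] at h
    simp [sat, upd, Function.update_of_ne h.1, Function.update_of_ne h.2]
  | and a b iha ihb =>
    intro w; simp only [Form.occursF, not_or] at h
    simp only [sat]; rw [iha h.1, ihb h.2]
  | or a b iha ihb =>
    intro w; simp only [Form.occursF, not_or] at h
    simp only [sat]; rw [iha h.1, ihb h.2]
  | imp a b iha ihb =>
    intro w; simp only [Form.occursF, not_or] at h
    simp only [sat]; rw [iha h.1, ihb h.2]
  | neg a iha =>
    intro w; simp only [Form.occursF] at h
    simp only [sat]; rw [iha h]
  | at_ i a iha =>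
    intro w; simp only [Form.occursF, not_or] at h
    simp only [sat]
    refine (iha h.2 _).trans ?_
    simp [upd, Function.update_of_ne h.1]
  | box a iha =>
    intro w; simp only [Form.occursF] at h
    simp only [sat]
    exact forall_congr' fun u => imp_congr Iff.rfl (iha h u)
  | dia a iha =>
    intro w; simp only [Form.occursF] at h
    simp only [sat]
    exact exists_congr fun u => and_congr Iff.rfl (iha h u)

theorem satL_upd (M : Model) (j : ℕ) (v : M.W) (f : LForm) (h : ¬ f.occursL j) :
    satL (upd M j v) f ↔ satL M f := by
  cases f with
  | lab i φ =>
    simp only [LForm.occursL, not_or] at h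
    simp only [satL]
    refine (sat_upd M j v φ h.2 _).trans ?_
    simp [upd, Function.update_of_ne h.1]
  | plain φ =>
    simp only [LForm.occursL] at h
    simp only [satL]
    exact forall_congr' fun u => sat_upd M j v φ h u

def restr (M : Model) : Model where
  W := {w : M.W // ∃ i, M.g i = w}
  ne := ⟨⟨M.g 0, 0, rfl⟩⟩
  R := fun a b => M.R a.1 b.1
  V := fun p a => M.V p a.1
  g := fun i => ⟨M.g i, i, rfl⟩

theorem sat_restr (M : Model) (i : ℕ) (φ : Form) (h : φ.elemF) :
    sat (restr M) ((restr M).g i) φ ↔ sat M (M.g i) φ := by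
  cases φ <;> simp_all [Form.elemF, sat, restr]

theorem sound {Γ Δ : Multiset LForm} (h : DS Γ Δ) :
    ∀ M : Model, (∀ f ∈ Γ, satL M f) → ∃ f ∈ Δ, satL M f := by
  induction h with
  | @V Γ Δ h1 h2 h3 =>
    intro M hM
    rcases h3 (restr M) (by rintro ⟨w, i, rfl⟩; exact ⟨i, rfl⟩) with ⟨i, φ, hm, hs⟩ | ⟨i, φ, hm, hs⟩
    · exact ⟨_, hm, (sat_restr M i φ (h2 _ hm)).1 hs⟩
    · exact absurd ((sat_restr M i φ (h1 _ hm)).2 (hM _ hm)) hs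
  | @U i φ hi _ ih =>
    intro M _
    refine ⟨_, Multiset.mem_singleton_self _, fun w => ?_⟩
    obtain ⟨f, hf, hs⟩ := ih (upd M i w) (by simp)
    rw [Multiset.mem_singleton] at hf
    subst hf
    have := (sat_upd M i w φ hi _).1 hs
    simpa [upd] using this
  | @Rbox Γ Δ i j φ hΓ hΔ hji hφ _ ih =>
    intro M hM
    simp only [Multiset.mem_cons, exists_eq_or_imp]
    by_cases hc : ∃ f ∈ Δ, satL M f
    · exact Or.inr hc
    left
    intro v hv
    obtain ⟨f, hf, hs⟩ := ih (upd M j v) (fun f hf => (satL_upd M j v f (hΓ f hf)).2 (hM f hf))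
    rcases Multiset.mem_cons.1 hf with rfl | hf
    · rcases hs with hs | hs
      · exact absurd (by simpa [sat, upd, Function.update_of_ne hji.symm] using hv) hs
      · have := (sat_upd M j v φ hφ _).1 hs
        simpa [upd] using this
    · exact absurd ⟨f, hf, (satL_upd M j v f (hΔ f hf)).1 hs⟩ hc
  | @Ldia Γ Δ i j φ hΓ hΔ hji hφ _ ih =>
    intro M hM
    simp only [Multiset.mem_cons, forall_eq_or_imp] at hM
    obtain ⟨⟨v, hv, hs⟩, hM⟩ := hM
    obtain ⟨f, hf, hs⟩ := ih (upd M j v) (by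
      intro f hf
      rcases Multiset.mem_cons.1 hf with rfl | hf
      · constructor
        · simpa [sat, upd, Function.update_of_ne hji.symm] using hv
        · refine (sat_upd M j v φ hφ _).2 ?_
          simpa [upd] using hs
      · exact (satL_upd M j v f (hΓ f hf)).2 (hM f hf))
    exact ⟨f, hf, (satL_upd M j v f (hΔ f hf)).1 hs⟩
  | @Lbox Γ Δ i j φ _ ih =>
    intro M hM
    apply ih M
    simp only [Multiset.mem_cons, forall_eq_or_imp, satL, sat] at hM ⊢
    refine ⟨?_, hM.2⟩
    by_cases hr : M.R (M.g i) (M.g j)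
    · exact Or.inr (hM.1 _ hr)
    · exact Or.inl hr
  | @Rdia Γ Δ i j φ _ ih =>
    intro M hM
    have := ih M hM
    simp only [Multiset.mem_cons, exists_eq_or_imp, satL, sat] at this ⊢
    rcases this with h | h
    · exact Or.inl ⟨_, h⟩
    · exact Or.inr h
  | _ =>
    intro M hM
    simp only [Multiset.mem_cons, exists_eq_or_imp, forall_eq_or_imp, satL, sat] at *
    grind

/-! ### Fresh nominals -/

theorem freshF (φ : Form) : ∃ N, ∀ k, N ≤ k → ¬ φ.occursF k := by
  induction φ with
  | prop p => exact ⟨0, fun k _ h => h⟩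
  | nom i => exact ⟨i + 1, fun k hk h => by simp only [Form.occursF] at h; omega⟩
  | rel a b => exact ⟨a + b + 1, fun k hk h => by simp only [Form.occursF] at h; omega⟩
  | and a b iha ihb =>
    obtain ⟨n, hn⟩ := iha
    obtain ⟨m, hm⟩ := ihb
    exact ⟨n + m, fun k hk h => h.elim (hn k (by omega)) (hm k (by omega))⟩
  | or a b iha ihb =>
    obtain ⟨n, hn⟩ := iha
    obtain ⟨m, hm⟩ := ihb
    exact ⟨n + m, fun k hk h => h.elim (hn k (by omega)) (hm k (by omega))⟩
  | imp a b iha ihb =>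
    obtain ⟨n, hn⟩ := iha
    obtain ⟨m, hm⟩ := ihb
    exact ⟨n + m, fun k hk h => h.elim (hn k (by omega)) (hm k (by omega))⟩
  | neg a iha => exact iha
  | at_ i a iha =>
    obtain ⟨n, hn⟩ := iha
    exact ⟨n + i + 1, fun k hk h => h.elim (fun h => by omega) (hn k (by omega))⟩
  | box a iha => exact iha
  | dia a iha => exact iha

theorem freshL (f : LForm) : ∃ N, ∀ k, N ≤ k → ¬ f.occursL k := by
  cases f with
  | lab i φ =>
    obtain ⟨n, hn⟩ := freshF φ
    exact ⟨n + i + 1, fun k hk h => h.elim (fun h => by omega) (hn k (by omega))⟩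
  | plain φ => exact freshF φ

theorem freshM (Γ : Multiset LForm) : ∃ N, ∀ k, N ≤ k → ∀ f ∈ Γ, ¬ f.occursL k := by
  induction Γ using Multiset.induction with
  | empty => exact ⟨0, by simp⟩
  | cons f Γ ih =>
    obtain ⟨n, hn⟩ := ih
    obtain ⟨m, hm⟩ := freshL f
    refine ⟨n + m, fun k hk g hg => ?_⟩
    rcases Multiset.mem_cons.1 hg with rfl | hg
    · exact hm k (by omega)
    · exact hn k (by omega) g hg

theorem fresh2 (Γ Δ : Multiset LForm) :
    ∃ k, (∀ f ∈ Γ, ¬ f.occursL k) ∧ (∀ f ∈ Δ, ¬ f.occursL k) := by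
  obtain ⟨n, hn⟩ := freshM Γ
  obtain ⟨m, hm⟩ := freshM Δ
  exact ⟨n + m, hn _ (by omega), hm _ (by omega)⟩

/-! ### Weakened base rule -/

def wt : Form → ℕ
  | .prop _ => 0
  | .nom _ => 0
  | .rel _ _ => 0
  | .and a b => wt a + wt b + 1
  | .or a b => wt a + wt b + 1
  | .imp a b => wt a + wt b + 1
  | .neg a => wt a + 1
  | .at_ _ a => wt a + 1
  | .box a => wt a + 3
  | .dia a => wt a + 3

def wtL : LForm → ℕ
  | .lab _ φ => wt φ
  | .plain _ => 0

def wtM (Γ : Multiset LForm) : ℕ := (Γ.map wtL).sum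

theorem wtM_cons (f : LForm) (Γ : Multiset LForm) : wtM (f ::ₘ Γ) = wtL f + wtM Γ := by
  simp [wtM]

def Lbd (Γ : Multiset LForm) : Prop := ∀ f ∈ Γ, ∃ i φ, f = LForm.lab i φ

theorem Lbd_cons {i φ} {Γ : Multiset LForm} : Lbd (.lab i φ ::ₘ Γ) ↔ Lbd Γ := by
  simp [Lbd, Multiset.mem_cons]

def EV (Γ Δ : Multiset LForm) : Prop :=
  ∀ M : Model, M.Named →
    (∃ i φ, φ.elemF ∧ LForm.lab i φ ∈ Δ ∧ sat M (M.g i) φ) ∨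
    (∃ i φ, φ.elemF ∧ LForm.lab i φ ∈ Γ ∧ ¬ sat M (M.g i) φ)

theorem EV_L {Γ Δ : Multiset LForm} {i φ} (hφ : ¬ φ.elemF) (h : EV (.lab i φ ::ₘ Γ) Δ) :
    EV Γ Δ := by
  intro M hM
  rcases h M hM with h | ⟨k, ψ, he, hm, hs⟩
  · exact Or.inl h
  · rcases Multiset.mem_cons.1 hm with h | h
    · cases h; exact absurd he hφ
    · exact Or.inr ⟨k, ψ, he, h, hs⟩

theorem EV_R {Γ Δ : Multiset LForm} {i φ} (hφ : ¬ φ.elemF) (h : EV Γ (.lab i φ ::ₘ Δ)) :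
    EV Γ Δ := by
  intro M hM
  rcases h M hM with ⟨k, ψ, he, hm, hs⟩ | h
  · rcases Multiset.mem_cons.1 hm with h | h
    · cases h; exact absurd he hφ
    · exact Or.inl ⟨k, ψ, he, h, hs⟩
  · exact Or.inr h

theorem EV_mono {Γ Δ Γ' Δ' : Multiset LForm} (h : EV Γ Δ) (h1 : Γ ⊆ Γ') (h2 : Δ ⊆ Δ') :
    EV Γ' Δ' := by
  intro M hM
  rcases h M hM with ⟨k, ψ, he, hm, hs⟩ | ⟨k, ψ, he, hm, hs⟩
  · exact Or.inl ⟨k, ψ, he, h2 hm, hs⟩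
  · exact Or.inr ⟨k, ψ, he, h1 hm, hs⟩

theorem base : ∀ (n : ℕ) (Γ Δ : Multiset LForm), wtM Γ + wtM Δ ≤ n → Lbd Γ → Lbd Δ →
    EV Γ Δ → DS Γ Δ := by
  intro n
  induction n using Nat.strong_induction_on with
  | _ n IH =>
  intro Γ Δ hn hΓ hΔ hE
  have rec' : ∀ Γ' Δ' : Multiset LForm, wtM Γ' + wtM Δ' < wtM Γ + wtM Δ → Lbd Γ' → Lbd Δ' →
      EV Γ' Δ' → DS Γ' Δ' := fun Γ' Δ' h => IH _ (lt_of_lt_of_le h hn) Γ' Δ' le_rfl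
  clear IH hn
  by_cases h1 : ∀ f ∈ Γ, LForm.elemL f
  · by_cases h2 : ∀ f ∈ Δ, LForm.elemL f
    · refine DS.V h1 h2 fun M hM => ?_
      rcases hE M hM with ⟨k, ψ, he, hm, hs⟩ | ⟨k, ψ, he, hm, hs⟩
      · exact Or.inl ⟨k, ψ, hm, hs⟩
      · exact Or.inr ⟨k, ψ, hm, hs⟩
    · push Not at h2
      obtain ⟨f, hf, hne⟩ := h2
      obtain ⟨i, φ, rfl⟩ := hΔ f hf
      obtain ⟨Δ, rfl⟩ := Multiset.exists_cons_of_mem hf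
      replace hE := EV_R hne hE
      rw [Lbd_cons] at hΔ
      have hEr : ∀ g, EV Γ (g ::ₘ Δ) :=
        fun g => EV_mono hE (fun _ h => h) (Multiset.subset_cons _ _)
      have hEl : ∀ g, EV (g ::ₘ Γ) Δ :=
        fun g => EV_mono hE (Multiset.subset_cons _ _) (fun _ h => h)
      have RR : ∀ j ψ, wt ψ < wt φ → DS Γ (.lab j ψ ::ₘ Δ) := fun j ψ hw =>
        rec' _ _ (by simp only [wtM_cons, wtL]; omega) hΓ (Lbd_cons.2 hΔ) (hEr _)
      have LL : ∀ j ψ, wt ψ < wt φ → DS (.lab j ψ ::ₘ Γ) Δ := fun j ψ hw =>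
        rec' _ _ (by simp only [wtM_cons, wtL]; omega) (Lbd_cons.2 hΓ) hΔ (hEl _)
      cases φ with
      | prop _ => exact absurd trivial hne
      | nom _ => exact absurd trivial hne
      | rel _ _ => exact absurd trivial hne
      | and a b => exact .Rand (RR _ _ (by simp only [wt]; omega)) (RR _ _ (by simp only [wt]; omega))
      | or a b => exact .Ror1 (RR _ _ (by simp only [wt]; omega))
      | imp a b => exact .Rimp2 (RR _ _ (by simp only [wt]; omega))
      | neg a => exact .Rneg (LL _ _ (by simp only [wt]; omega))
      | at_ k a => exact .Rat (RR _ _ (by simp only [wt]; omega))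
      | dia a => exact .Rdia (j := 0) (RR _ _ (by simp only [wt]; omega))
      | box a =>
        obtain ⟨k, hk1, hk2⟩ := fresh2 Γ (.lab i (.box a) ::ₘ Δ)
        have hk3 := hk2 _ (Multiset.mem_cons_self _ _)
        simp only [LForm.occursL, Form.occursF, not_or] at hk3
        exact .Rbox (j := k) hk1 (fun f hf => hk2 f (Multiset.mem_cons_of_mem hf))
          (Ne.symm hk3.1) hk3.2 (RR _ _ (by simp only [wt]; omega))
  · push Not at h1
    obtain ⟨f, hf, hne⟩ := h1
    obtain ⟨i, φ, rfl⟩ := hΓ f hf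
    obtain ⟨Γ, rfl⟩ := Multiset.exists_cons_of_mem hf
    replace hE := EV_L hne hE
    rw [Lbd_cons] at hΓ
    have hEr : ∀ g, EV Γ (g ::ₘ Δ) :=
      fun g => EV_mono hE (fun _ h => h) (Multiset.subset_cons _ _)
    have hEl : ∀ g, EV (g ::ₘ Γ) Δ :=
      fun g => EV_mono hE (Multiset.subset_cons _ _) (fun _ h => h)
    have RR : ∀ j ψ, wt ψ < wt φ → DS Γ (.lab j ψ ::ₘ Δ) := fun j ψ hw =>
      rec' _ _ (by simp only [wtM_cons, wtL]; omega) hΓ (Lbd_cons.2 hΔ) (hEr _)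
    have LL : ∀ j ψ, wt ψ < wt φ → DS (.lab j ψ ::ₘ Γ) Δ := fun j ψ hw =>
      rec' _ _ (by simp only [wtM_cons, wtL]; omega) (Lbd_cons.2 hΓ) hΔ (hEl _)
    cases φ with
    | prop _ => exact absurd trivial hne
    | nom _ => exact absurd trivial hne
    | rel _ _ => exact absurd trivial hne
    | or a b => exact .Lor (LL _ _ (by simp only [wt]; omega)) (LL _ _ (by simp only [wt]; omega))
    | and a b => exact .Land1 (LL _ _ (by simp only [wt]; omega))
    | imp a b => exact .Limp (RR _ _ (by simp only [wt]; omega)) (LL _ _ (by simp only [wt]; omega))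
    | neg a => exact .Lneg (RR _ _ (by simp only [wt]; omega))
    | at_ k a => exact .Lat (LL _ _ (by simp only [wt]; omega))
    | box a => exact .Lbox (j := 0) (LL _ _ (by simp only [wt]; omega))
    | dia a =>
      obtain ⟨k, hk2, hk1⟩ := fresh2 (.lab i (.dia a) ::ₘ Γ) Δ
      have hk3 := hk2 _ (Multiset.mem_cons_self _ _)
      simp only [LForm.occursL, Form.occursF, not_or] at hk3
      exact .Ldia (j := k) (fun f hf => hk2 f (Multiset.mem_cons_of_mem hf)) hk1
        (Ne.symm hk3.1) hk3.2 (LL _ _ (by simp only [wt]; omega))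

/-! ### States -/

structure St where
  L : Multiset LForm
  R : Multiset LForm
  hL : Lbd L
  hR : Lbd R
  np : ¬ DS L R

instance : Preorder St where
  le p q := p.L ⊆ q.L ∧ p.R ⊆ q.R
  le_refl _ := ⟨fun _ h => h, fun _ h => h⟩
  le_trans _ _ _ h1 h2 := ⟨fun _ h => h2.1 (h1.1 h), fun _ h => h2.2 (h1.2 h)⟩

theorem St.extL (p : St) (i : ℕ) (φ : Form) (h : ¬ DS (.lab i φ ::ₘ p.L) p.R) :
    ∃ q, p ≤ q ∧ LForm.lab i φ ∈ q.L :=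
  ⟨⟨_, _, Lbd_cons.2 p.hL, p.hR, h⟩, ⟨Multiset.subset_cons _ _, fun _ h => h⟩,
    Multiset.mem_cons_self _ _⟩

theorem St.extR (p : St) (i : ℕ) (φ : Form) (h : ¬ DS p.L (.lab i φ ::ₘ p.R)) :
    ∃ q, p ≤ q ∧ LForm.lab i φ ∈ q.R :=
  ⟨⟨_, _, p.hL, Lbd_cons.2 p.hR, h⟩, ⟨fun _ h => h, Multiset.subset_cons _ _⟩,
    Multiset.mem_cons_self _ _⟩

theorem CL' {Γ Δ i φ} (hm : LForm.lab i φ ∈ Γ) (h : DS (.lab i φ ::ₘ Γ) Δ) : DS Γ Δ := by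
  obtain ⟨Γ, rfl⟩ := Multiset.exists_cons_of_mem hm
  exact .CL h

theorem CR' {Γ Δ i φ} (hm : LForm.lab i φ ∈ Δ) (h : DS Γ (.lab i φ ::ₘ Δ)) : DS Γ Δ := by
  obtain ⟨Δ, rfl⟩ := Multiset.exists_cons_of_mem hm
  exact .CR h

def memS (b : Bool) (i : ℕ) (φ : Form) (q : St) : Prop :=
  match b with
  | true => LForm.lab i φ ∈ q.L
  | false => LForm.lab i φ ∈ q.R

def Ful (b : Bool) (i : ℕ) (φ : Form) (j : ℕ) (q : St) : Prop :=
  match b, φ with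
  | true, .and a b => LForm.lab i a ∈ q.L ∧ LForm.lab i b ∈ q.L
  | false, .and a b => LForm.lab i a ∈ q.R ∨ LForm.lab i b ∈ q.R
  | true, .or a b => LForm.lab i a ∈ q.L ∨ LForm.lab i b ∈ q.L
  | false, .or a b => LForm.lab i a ∈ q.R ∧ LForm.lab i b ∈ q.R
  | true, .imp a b => LForm.lab i a ∈ q.R ∨ LForm.lab i b ∈ q.L
  | false, .imp a b => LForm.lab i a ∈ q.L ∧ LForm.lab i b ∈ q.R
  | true, .neg a => LForm.lab i a ∈ q.R
  | false, .neg a => LForm.lab i a ∈ q.L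
  | true, .at_ k a => LForm.lab k a ∈ q.L
  | false, .at_ k a => LForm.lab k a ∈ q.R
  | true, .box a => LForm.lab j (.or (.neg (.rel i j)) a) ∈ q.L
  | false, .box a => ∃ k, LForm.lab k (.or (.neg (.rel i k)) a) ∈ q.R
  | true, .dia a => ∃ k, LForm.lab k (.and (.rel i k) a) ∈ q.L
  | false, .dia a => LForm.lab j (.and (.rel i j) a) ∈ q.R
  | _, _ => True

theorem ful_ext (b : Bool) (i : ℕ) (φ : Form) (j : ℕ) (p : St) (h : memS b i φ p) :
    ∃ q, p ≤ q ∧ Ful b i φ j q := by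
  cases b with
  | true =>
    simp only [memS] at h
    cases φ with
    | prop _ => exact ⟨p, le_rfl, trivial⟩
    | nom _ => exact ⟨p, le_rfl, trivial⟩
    | rel _ _ => exact ⟨p, le_rfl, trivial⟩
    | and a b =>
      obtain ⟨q, hq, hqa⟩ := p.extL i a (fun hd => p.np (CL' h (.Land1 hd)))
      obtain ⟨r, hr, hrb⟩ := q.extL i b (fun hd => q.np (CL' (hq.1 h) (.Land2 hd)))
      exact ⟨r, le_trans hq hr, hr.1 hqa, hrb⟩
    | or a b =>
      by_cases h1 : DS (.lab i a ::ₘ p.L) p.R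
      · obtain ⟨q, hq, hqa⟩ := p.extL i b (fun hd => p.np (CL' h (.Lor h1 hd)))
        exact ⟨q, hq, Or.inr hqa⟩
      · obtain ⟨q, hq, hqa⟩ := p.extL i a h1
        exact ⟨q, hq, Or.inl hqa⟩
    | imp a b =>
      by_cases h1 : DS p.L (.lab i a ::ₘ p.R)
      · obtain ⟨q, hq, hqa⟩ := p.extL i b (fun hd => p.np (CL' h (.Limp h1 hd)))
        exact ⟨q, hq, Or.inr hqa⟩
      · obtain ⟨q, hq, hqa⟩ := p.extR i a h1
        exact ⟨q, hq, Or.inl hqa⟩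
    | neg a => exact p.extR i a (fun hd => p.np (CL' h (.Lneg hd)))
    | at_ k a => exact p.extL k a (fun hd => p.np (CL' h (.Lat hd)))
    | box a => exact p.extL j _ (fun hd => p.np (CL' h (.Lbox hd)))
    | dia a =>
      obtain ⟨k, hk1, hk2⟩ := fresh2 p.L p.R
      have hk3 := hk1 _ h
      simp only [LForm.occursL, Form.occursF, not_or] at hk3
      obtain ⟨q, hq, hqa⟩ := p.extL k (.and (.rel i k) a)
        (fun hd => p.np (CL' h (.Ldia hk1 hk2 (Ne.symm hk3.1) hk3.2 hd)))
      exact ⟨q, hq, k, hqa⟩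
  | false =>
    simp only [memS] at h
    cases φ with
    | prop _ => exact ⟨p, le_rfl, trivial⟩
    | nom _ => exact ⟨p, le_rfl, trivial⟩
    | rel _ _ => exact ⟨p, le_rfl, trivial⟩
    | or a b =>
      obtain ⟨q, hq, hqa⟩ := p.extR i a (fun hd => p.np (CR' h (.Ror1 hd)))
      obtain ⟨r, hr, hrb⟩ := q.extR i b (fun hd => q.np (CR' (hq.2 h) (.Ror2 hd)))
      exact ⟨r, le_trans hq hr, hr.2 hqa, hrb⟩
    | and a b =>
      by_cases h1 : DS p.L (.lab i a ::ₘ p.R)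
      · obtain ⟨q, hq, hqa⟩ := p.extR i b (fun hd => p.np (CR' h (.Rand h1 hd)))
        exact ⟨q, hq, Or.inr hqa⟩
      · obtain ⟨q, hq, hqa⟩ := p.extR i a h1
        exact ⟨q, hq, Or.inl hqa⟩
    | imp a b =>
      obtain ⟨q, hq, hqa⟩ := p.extL i a (fun hd => p.np (CR' h (.Rimp1 hd)))
      obtain ⟨r, hr, hrb⟩ := q.extR i b (fun hd => q.np (CR' (hq.2 h) (.Rimp2 hd)))
      exact ⟨r, le_trans hq hr, hr.1 hqa, hrb⟩
    | neg a => exact p.extL i a (fun hd => p.np (CR' h (.Rneg hd)))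
    | at_ k a => exact p.extR k a (fun hd => p.np (CR' h (.Rat hd)))
    | dia a => exact p.extR j _ (fun hd => p.np (CR' h (.Rdia hd)))
    | box a =>
      obtain ⟨k, hk1, hk2⟩ := fresh2 p.L p.R
      have hk3 := hk2 _ h
      simp only [LForm.occursL, Form.occursF, not_or] at hk3
      obtain ⟨q, hq, hqa⟩ := p.extR k (.or (.neg (.rel i k)) a)
        (fun hd => p.np (CR' h (.Rbox hk1 hk2 (Ne.symm hk3.1) hk3.2 hd)))
      exact ⟨q, hq, k, hqa⟩

/-! ### Countability -/

def enc : Form → ℕ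
  | .prop p => Nat.pair 0 p
  | .nom p => Nat.pair 1 p
  | .rel p q => Nat.pair 2 (Nat.pair p q)
  | .and a b => Nat.pair 3 (Nat.pair (enc a) (enc b))
  | .or a b => Nat.pair 4 (Nat.pair (enc a) (enc b))
  | .imp a b => Nat.pair 5 (Nat.pair (enc a) (enc b))
  | .neg a => Nat.pair 6 (enc a)
  | .at_ i a => Nat.pair 7 (Nat.pair i (enc a))
  | .box a => Nat.pair 8 (enc a)
  | .dia a => Nat.pair 9 (enc a)

theorem enc_inj : ∀ a b : Form, enc a = enc b → a = b := by
  intro a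
  induction a <;> intro b h <;> cases b <;> simp [enc, Nat.pair_eq_pair] at h ⊢ <;> grind

instance : Countable Form := ⟨enc, fun a b h => enc_inj a b h⟩

/-! ### The generic branch -/

def Dn (x : Bool × ℕ × Form × ℕ) : Order.Cofinal St where
  carrier := {q | (Ful x.1 x.2.1 x.2.2.1 x.2.2.2 q) ∨ ∀ r, q ≤ r → ¬ memS x.1 x.2.1 x.2.2.1 r}
  isCofinal := by
    intro p
    by_cases h : ∃ r, p ≤ r ∧ memS x.1 x.2.1 x.2.2.1 r
    · obtain ⟨r, hr, hm⟩ := h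
      obtain ⟨q, hq, hf⟩ := ful_ext _ _ _ x.2.2.2 r hm
      exact ⟨q, Or.inl hf, le_trans hr hq⟩
    · push Not at h
      exact ⟨p, Or.inr h, le_rfl⟩

theorem memS_mono {b i φ} {p q : St} (h : p ≤ q) (hm : memS b i φ p) : memS b i φ q := by
  cases b
  · exact h.2 hm
  · exact h.1 hm

theorem exists_generic (p : St) : ∃ I : Set St, p ∈ I ∧ DirectedOn (· ≤ ·) I ∧
    ∀ b i φ j, ∀ q ∈ I, memS b i φ q → ∃ r ∈ I, Ful b i φ j r := by
  haveI : Encodable (Bool × ℕ × Form × ℕ) := Encodable.ofCountable _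
  let I := Order.idealOfCofinals p Dn
  refine ⟨(I : Set St), Order.mem_idealOfCofinals p Dn, I.directed, ?_⟩
  intro b i φ j q hq hm
  obtain ⟨r, hr, hrI⟩ := Order.cofinal_meets_idealOfCofinals p Dn (b, i, φ, j)
  rcases hr with hr | hr
  · exact ⟨r, hrI, hr⟩
  · obtain ⟨s, _, h1, h2⟩ := I.directed q hq r hrI
    exact absurd (memS_mono h1 hm) (hr s h2)

/-- `T I i φ`: the elementary fact `i : φ` is entailed by the branch. -/
def T (I : Set St) (i : ℕ) (φ : Form) : Prop :=
  ∃ p ∈ I, ∀ M : Model, M.Named →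
    (∀ k ψ, ψ.elemF → LForm.lab k ψ ∈ p.L → sat M (M.g k) ψ) → sat M (M.g i) φ

theorem T_0 {I : Set St} (hne : I.Nonempty) {i φ}
    (h : ∀ M : Model, sat M (M.g i) φ) : T I i φ := by
  obtain ⟨p, hp⟩ := hne
  exact ⟨p, hp, fun M _ _ => h M⟩

theorem T_3 {I : Set St} (hd : DirectedOn (· ≤ ·) I) {i₁ φ₁ i₂ φ₂ i₃ φ₃ i φ}
    (h1 : T I i₁ φ₁) (h2 : T I i₂ φ₂) (h3 : T I i₃ φ₃)
    (h : ∀ M : Model, sat M (M.g i₁) φ₁ → sat M (M.g i₂) φ₂ → sat M (M.g i₃) φ₃ →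
      sat M (M.g i) φ) : T I i φ := by
  obtain ⟨p, hp, h1⟩ := h1
  obtain ⟨q, hq, h2⟩ := h2
  obtain ⟨r, hr, h3⟩ := h3
  obtain ⟨s, hs, hps, hqs⟩ := hd p hp q hq
  obtain ⟨t, ht, hst, hrt⟩ := hd s hs r hr
  refine ⟨t, ht, fun M hM hT => h M ?_ ?_ ?_⟩
  · exact h1 M hM fun k ψ he hm => hT k ψ he (hst.1 (hps.1 hm))
  · exact h2 M hM fun k ψ he hm => hT k ψ he (hst.1 (hqs.1 hm))
  · exact h3 M hM fun k ψ he hm => hT k ψ he (hrt.1 hm)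

def TS (I : Set St) (hne : I.Nonempty) (hd : DirectedOn (· ≤ ·) I) : Setoid ℕ where
  r i j := T I i (.nom j)
  iseqv :=
    { refl := fun i => T_0 hne fun M => rfl
      symm := fun {i j} h => T_3 hd h h h fun M h _ _ => Eq.symm h
      trans := fun {i j k} h1 h2 => T_3 hd h1 h2 h2 fun M h1 h2 _ => Eq.trans h2 h1 }

def TM (I : Set St) (hne : I.Nonempty) (hd : DirectedOn (· ≤ ·) I) : Model where
  W := Quotient (TS I hne hd)
  ne := ⟨Quotient.mk _ 0⟩
  R := fun a b => ∃ i j, Quotient.mk _ i = a ∧ Quotient.mk _ j = b ∧ T I 0 (.rel i j)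
  V := fun p a => ∃ i, Quotient.mk _ i = a ∧ T I i (.prop p)
  g := fun i => Quotient.mk _ i

theorem TM_elem {I : Set St} (hne : I.Nonempty) (hd : DirectedOn (· ≤ ·) I) (i : ℕ) (φ : Form)
    (hφ : φ.elemF) : sat (TM I hne hd) ((TM I hne hd).g i) φ ↔ T I i φ := by
  have key : ∀ a b : ℕ, (Quotient.mk (TS I hne hd) a = Quotient.mk (TS I hne hd) b) ↔
      T I a (.nom b) := fun a b => Quotient.eq
  cases φ with
  | prop p =>
    constructor
    · rintro ⟨k, hk, hT⟩
      have hk := (key _ _).1 hk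
      refine T_3 hd hk hT hT fun M h1 h2 _ => ?_
      simp only [sat] at h1 h2 ⊢
      rw [h1]; exact h2
    · intro h
      exact ⟨i, rfl, h⟩
  | nom j =>
    refine (key j i).trans ?_
    constructor <;> exact fun h => T_3 hd h h h fun M h _ _ => Eq.symm h
  | rel a b =>
    constructor
    · rintro ⟨k, l, hk, hl, hT⟩
      have hk := (key _ _).1 hk
      have hl := (key _ _).1 hl
      refine T_3 hd hk hl hT fun M h1 h2 h3 => ?_
      simp only [sat] at h1 h2 h3 ⊢
      rw [h1, h2]; exact h3
    · intro h
      exact ⟨a, b, rfl, rfl, T_3 hd h h h fun M h _ _ => h⟩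
  | _ => exact hφ.elim

theorem T_L {I : Set St} {i φ} (hφ : φ.elemF) {p : St} (hp : p ∈ I)
    (h : LForm.lab i φ ∈ p.L) : T I i φ :=
  ⟨p, hp, fun _ _ hT => hT _ _ hφ h⟩

theorem T_R {I : Set St} (hd : DirectedOn (· ≤ ·) I) {i φ} (hφ : φ.elemF) {p : St} (hp : p ∈ I)
    (h : LForm.lab i φ ∈ p.R) : ¬ T I i φ := by
  rintro ⟨q, hq, hT⟩
  obtain ⟨r, hr, hpr, hqr⟩ := hd p hp q hq
  refine r.np (base _ _ _ le_rfl r.hL r.hR fun M hM => ?_)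
  by_cases hc : ∀ k ψ, ψ.elemF → LForm.lab k ψ ∈ q.L → sat M (M.g k) ψ
  · exact Or.inl ⟨i, φ, hφ, hpr.2 h, hT M hM hc⟩
  · push Not at hc
    obtain ⟨k, ψ, he, hm, hs⟩ := hc
    exact Or.inr ⟨k, ψ, he, hqr.1 hm, hs⟩

theorem truth {I : Set St} (hne : I.Nonempty) (hd : DirectedOn (· ≤ ·) I)
    (hF : ∀ b i φ j, ∀ q ∈ I, memS b i φ q → ∃ r ∈ I, Ful b i φ j r) (φ : Form) :
    ∀ i, (∀ p ∈ I, LForm.lab i φ ∈ p.L → sat (TM I hne hd) ((TM I hne hd).g i) φ) ∧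
      (∀ p ∈ I, LForm.lab i φ ∈ p.R → ¬ sat (TM I hne hd) ((TM I hne hd).g i) φ) := by
  have hel : ∀ (φ : Form), φ.elemF →
    ∀ i, (∀ p ∈ I, LForm.lab i φ ∈ p.L → sat (TM I hne hd) ((TM I hne hd).g i) φ) ∧
      (∀ p ∈ I, LForm.lab i φ ∈ p.R → ¬ sat (TM I hne hd) ((TM I hne hd).g i) φ) := by
    intro φ hφ i
    rw [TM_elem hne hd i φ hφ]
    exact ⟨fun p hp h => T_L hφ hp h, fun p hp h => T_R hd hφ hp h⟩
  have hsurj : ∀ w : (TM I hne hd).W, ∃ j, (TM I hne hd).g j = w := by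
    intro w
    obtain ⟨j, hj⟩ := Quotient.exists_rep w
    exact ⟨j, hj⟩
  induction φ with
  | prop _ => exact hel _ trivial
  | nom _ => exact hel _ trivial
  | rel _ _ => exact hel _ trivial
  | and a b iha ihb =>
    refine fun i => ⟨fun p hp h => ?_, fun p hp h => ?_⟩
    · obtain ⟨r, hr, h1, h2⟩ := hF true i _ 0 p hp h
      exact ⟨(iha i).1 r hr h1, (ihb i).1 r hr h2⟩
    · obtain ⟨r, hr, h1 | h1⟩ := hF false i _ 0 p hp h
      · exact fun hs => (iha i).2 r hr h1 hs.1
      · exact fun hs => (ihb i).2 r hr h1 hs.2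
  | or a b iha ihb =>
    refine fun i => ⟨fun p hp h => ?_, fun p hp h => ?_⟩
    · obtain ⟨r, hr, h1 | h1⟩ := hF true i _ 0 p hp h
      · exact Or.inl ((iha i).1 r hr h1)
      · exact Or.inr ((ihb i).1 r hr h1)
    · obtain ⟨r, hr, h1, h2⟩ := hF false i _ 0 p hp h
      exact fun hs => hs.elim ((iha i).2 r hr h1) ((ihb i).2 r hr h2)
  | imp a b iha ihb =>
    refine fun i => ⟨fun p hp h => ?_, fun p hp h => ?_⟩
    · obtain ⟨r, hr, h1 | h1⟩ := hF true i _ 0 p hp h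
      · exact Or.inl ((iha i).2 r hr h1)
      · exact Or.inr ((ihb i).1 r hr h1)
    · obtain ⟨r, hr, h1, h2⟩ := hF false i _ 0 p hp h
      exact fun hs => hs.elim (fun hs => hs ((iha i).1 r hr h1)) ((ihb i).2 r hr h2)
  | neg a iha =>
    refine fun i => ⟨fun p hp h => ?_, fun p hp h => ?_⟩
    · obtain ⟨r, hr, h1⟩ := hF true i _ 0 p hp h
      exact (iha i).2 r hr h1
    · obtain ⟨r, hr, h1⟩ := hF false i _ 0 p hp h
      exact fun hs => hs ((iha i).1 r hr h1)
  | at_ k a iha =>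
    refine fun i => ⟨fun p hp h => ?_, fun p hp h => ?_⟩
    · obtain ⟨r, hr, h1⟩ := hF true i _ 0 p hp h
      exact (iha k).1 r hr h1
    · obtain ⟨r, hr, h1⟩ := hF false i _ 0 p hp h
      exact (iha k).2 r hr h1
  | box a iha =>
    refine fun i => ⟨fun p hp h => ?_, fun p hp h => ?_⟩
    · intro v hv
      obtain ⟨j, rfl⟩ := hsurj v
      obtain ⟨r, hr, h1⟩ := hF true i _ j p hp h
      obtain ⟨s, hs, h2 | h2⟩ := hF true j _ 0 r hr h1
      · obtain ⟨t, ht, h3⟩ := hF true j _ 0 s hs h2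
        exact absurd hv ((hel (.rel i j) trivial j).2 t ht h3)
      · exact (iha j).1 s hs h2
    · obtain ⟨r, hr, j, h1⟩ := hF false i _ 0 p hp h
      obtain ⟨s, hs, h2, h3⟩ := hF false j _ 0 r hr h1
      obtain ⟨t, ht, h4⟩ := hF false j _ 0 s hs h2
      exact fun hh => (iha j).2 s hs h3 (hh _ ((hel (.rel i j) trivial j).1 t ht h4))
  | dia a iha =>
    refine fun i => ⟨fun p hp h => ?_, fun p hp h => ?_⟩
    · obtain ⟨r, hr, j, h1⟩ := hF true i _ 0 p hp h
      obtain ⟨s, hs, h2, h3⟩ := hF true j _ 0 r hr h1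
      exact ⟨_, (hel (.rel i j) trivial j).1 s hs h2, (iha j).1 s hs h3⟩
    · rintro ⟨v, hv, hv2⟩
      obtain ⟨j, rfl⟩ := hsurj v
      obtain ⟨r, hr, h1⟩ := hF false i _ j p hp h
      obtain ⟨s, hs, h2 | h2⟩ := hF false j _ 0 r hr h1
      · exact (hel (.rel i j) trivial j).2 s hs h2 hv
      · exact (iha j).2 s hs h2 hv2

theorem complete (φ : Form) (h : Valid φ) : DS 0 {LForm.plain φ} := by
  obtain ⟨n, hn⟩ := freshF φ
  refine DS.U (hn n le_rfl) ?_
  by_contra hc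
  let p : St := ⟨0, {LForm.lab n φ}, by simp [Lbd], by simp [Lbd], hc⟩
  obtain ⟨I, hp, hd, hF⟩ := exists_generic p
  exact (truth ⟨p, hp⟩ hd hF φ n).2 p hp (Multiset.mem_singleton_self _) (h _ _)

/-- (Theorem 3) Soundness and completeness of `DS`: `⊢ φ` is provable in `DS` iff `φ` is valid. -/
theorem ds_provable_iff_valid (φ : Form) :
    DS 0 {LForm.plain φ} ↔ Valid φ := by
  constructor
  · intro h M w
    have := sound h M (by simp)
    simp [satL] at this
    exact this w
  · exact complete φ
end
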